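/- Let R be a Leibniz conformal algebra, Q a ℂ[∂]-module, and Ω(R,Q) an extending datum in which ⇀_λ and ◁_λ are trivial, written Ω(R,Q) = (↼_λ, ▷_λ, f_λ, {·_λ·}). Then Ω(R,Q) is a Leibniz conformal extending structure (equivalently, the bracket [(a,x)_λ (b,y)] = ([a_λ b] + x▷_λ b + a↼_λ y + f_λ(x,y), {x_λ y}) makes R × Q a Leibniz conformal algebra, the crossed product R♮^f_{▷,↼} Q) if and only if (Q, {·_λ·}) is a Leibniz conformal algebra and for all a,b ∈ R, x,y,z ∈ Q: (C1) [a_λ b]↼_{λ+μ} x = [a_λ (b↼_μ x)] − [b_μ (a↼_λ x)]; (C2) x▷_μ [a_λ b] = [a_λ (x▷_μ b)] − [(a↼_λ x)_{λ+μ} b]; (C3) [(x▷_μ a)_{λ+μ} b] + [(a↼_λ x)_{λ+μ} b] = 0; (C4) a↼_λ {x_μ y} = (a↼_λ x)↼_{λ+μ} y + x▷_μ (a↼_λ y) − [a_λ f_μ(x,y)]; (C5) (x▷_μ a)↼_{λ+μ} y + (a↼_λ x)↼_{λ+μ} y = 0; (C6) {x_λ y}▷_{λ+μ} a = x▷_λ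 (y▷_μ a) − [f_λ(x,y)_{λ+μ} a] − y▷_μ (x▷_λ a); (C7) x▷_λ f_μ(y,z) = f_λ(x,y)↼_{λ+μ} z + f_{λ+μ}({x_λ y}, z) + y▷_μ f_λ(x,z) + f_μ(y, {x_λ z}) − f_λ(x, {y_μ z}). -/

import Mathlib

noncomputable section

/-- `g : ℂ → R` is (the evaluation of) a polynomial in `λ` with coefficients in `R`,
i.e. an element of `R[λ]`. -/
def IsPolyFun {R : Type*} [AddCommGroup R] [Module ℂ R] (g : ℂ → R) : Prop :=
  ∃ (N : ℕ) (c : ℕ → R), ∀ l : ℂ, g l = ∑ i ∈ Finset.range N, l ^ i • c i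

/-- A conformal bilinear map `U × V → W[λ]`, in evaluated form: `f_λ(∂u, v) = -λ f_λ(u,v)`
and `f_λ(u, ∂v) = (∂ + λ) f_λ(u,v)`. -/
structure IsConformalBilin {U V W : Type*}
    [AddCommGroup U] [Module ℂ U] [AddCommGroup V] [Module ℂ V]
    [AddCommGroup W] [Module ℂ W]
    (DU : Module.End ℂ U) (DV : Module.End ℂ V) (DW : Module.End ℂ W)
    (f : ℂ → U → V → W) : Prop where
  add_left : ∀ (l : ℂ) (a a' : U) (b : V), f l (a + a') b = f l a b + f l a' b
  smul_left : ∀ (l c : ℂ) (a : U) (b : V), f l (c • a) b = c • f l a b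
  add_right : ∀ (l : ℂ) (a : U) (b b' : V), f l a (b + b') = f l a b + f l a b'
  smul_right : ∀ (l c : ℂ) (a : U) (b : V), f l a (c • b) = c • f l a b
  poly : ∀ (a : U) (b : V), IsPolyFun (fun l => f l a b)
  conf_left : ∀ (l : ℂ) (a : U) (b : V), f l (DU a) b = (-l) • f l a b
  conf_right : ∀ (l : ℂ) (a : U) (b : V), f l a (DV b) = DW (f l a b) + l • f l a b

/-- A Leibniz conformal algebra structure on the `ℂ[∂]`-module `(R, D)`:
a conformal bilinear `λ`-bracket satisfying the Jacobi identity. -/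
structure IsLeibnizConformal {R : Type*} [AddCommGroup R] [Module ℂ R]
    (D : Module.End ℂ R) (br : ℂ → R → R → R) : Prop where
  bilin : IsConformalBilin D D D br
  jacobi : ∀ (l m : ℂ) (a b c : R),
    br l a (br m b c) = br (l + m) (br l a b) c + br m b (br l a c)

/-- An extending datum `Ω(R,Q) = (↼, ⇀, ◁, ▷, f, {·_λ·})` of a Leibniz conformal algebra
`R` by a `ℂ[∂]`-module `Q`: six conformal bilinear maps.  Here `lh = ↼`, `rh = ⇀`,
`lt = ◁`, `rt = ▷`, `fm = f`, `bq = {·_λ·}`. -/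
structure IsExtendingDatum {R Q : Type*}
    [AddCommGroup R] [Module ℂ R] [AddCommGroup Q] [Module ℂ Q]
    (DR : Module.End ℂ R) (DQ : Module.End ℂ Q)
    (lh : ℂ → R → Q → R) (rh : ℂ → R → Q → Q)
    (lt : ℂ → Q → R → Q) (rt : ℂ → Q → R → R)
    (fm : ℂ → Q → Q → R) (bq : ℂ → Q → Q → Q) : Prop where
  lh_bilin : IsConformalBilin DR DQ DR lh
  rh_bilin : IsConformalBilin DR DQ DQ rh
  lt_bilin : IsConformalBilin DQ DR DQ lt
  rt_bilin : IsConformalBilin DQ DR DR rt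
  fm_bilin : IsConformalBilin DQ DQ DR fm
  bq_bilin : IsConformalBilin DQ DQ DQ bq

/-- The unified product bracket on `R × Q`:
`[(a,x)_λ (b,y)] = ([a_λ b] + a↼_λ y + x▷_λ b + f_λ(x,y), a⇀_λ y + x◁_λ b + {x_λ y})`. -/
def unifiedBracket {R Q : Type*}
    [AddCommGroup R] [Module ℂ R] [AddCommGroup Q] [Module ℂ Q]
    (br : ℂ → R → R → R)
    (lh : ℂ → R → Q → R) (rh : ℂ → R → Q → Q)
    (lt : ℂ → Q → R → Q) (rt : ℂ → Q → R → R)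
    (fm : ℂ → Q → Q → R) (bq : ℂ → Q → Q → Q) :
    ℂ → R × Q → R × Q → R × Q :=
  fun l p q =>
    (br l p.1 q.1 + lh l p.1 q.2 + rt l p.2 q.1 + fm l p.2 q.2,
     rh l p.1 q.2 + lt l p.2 q.1 + bq l p.2 q.2)

/-! The Jacobi identity for the crossed product bracket is the vanishing of its jacobiator, which is
additive in each argument, so it suffices to test it on triples of elements each lying in `R` or in
`Q`. The triples `(R, R, Q)`, `(R, Q, R)`, `(R, Q, Q)`, `(Q, Q, R)` give (C1), (C2), (C4), (C6), and
`(Q, Q, Q)` gives (C7) in the `R`-component and the Jacobi identity of `Q` in the `Q`-component.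
Swapping the first two arguments changes the sign of the jacobiator up to left multiplication by the
symmetrized bracket `[p_λ q] + [q_μ p]`; hence, given (C2) and (C4), the remaining triples
`(Q, R, R)` and `(Q, R, Q)` say that `a↼_λ x + x▷_μ a` annihilates `R` and `Q` from the left, which
is (C3) and (C5). -/

namespace IsPolyFun

variable {R S : Type*} [AddCommGroup R] [Module ℂ R] [AddCommGroup S] [Module ℂ S]
  {g : ℂ → R} {h : ℂ → S}

theorem iff_exists_finsupp :
    IsPolyFun g ↔ ∃ c : ℕ →₀ R, ∀ l : ℂ, g l = c.sum fun i r => l ^ i • r := by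
  constructor
  · rintro ⟨N, c, hc⟩
    refine ⟨∑ i ∈ Finset.range N, Finsupp.single i (c i), fun l => ?_⟩
    rw [hc, ← Finsupp.sum_finsetSum_index (by simp) (by simp)]
    simp
  · rintro ⟨c, hc⟩
    refine ⟨c.support.sup id + 1, c, fun l => ?_⟩
    rw [hc, Finsupp.sum_of_support_subset c (Finset.subset_range_sup_succ _) _ (by simp)]

theorem zero : IsPolyFun fun _ => (0 : R) :=
  ⟨0, 0, by simp⟩

theorem add {g' : ℂ → R} (hg : IsPolyFun g) (hg' : IsPolyFun g') :
    IsPolyFun fun l => g l + g' l := by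
  rw [iff_exists_finsupp] at hg hg' ⊢
  obtain ⟨c, hc⟩ := hg
  obtain ⟨c', hc'⟩ := hg'
  refine ⟨c + c', fun l => ?_⟩
  rw [hc, hc', Finsupp.sum_add_index' (by simp) (by simp)]

theorem map (φ : R →ₗ[ℂ] S) (hg : IsPolyFun g) : IsPolyFun fun l => φ (g l) := by
  obtain ⟨N, c, hc⟩ := hg
  exact ⟨N, fun i => φ (c i), fun l => by simp [hc]⟩

theorem prodMk (hg : IsPolyFun g) (hh : IsPolyFun h) : IsPolyFun fun l => (g l, h l) := by
  simpa using (hg.map (LinearMap.inl ℂ R S)).add (hh.map (LinearMap.inr ℂ R S))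

end IsPolyFun

namespace IsConformalBilin

variable {U V W : Type*} [AddCommGroup U] [Module ℂ U] [AddCommGroup V] [Module ℂ V]
  [AddCommGroup W] [Module ℂ W]
  {DU : Module.End ℂ U} {DV : Module.End ℂ V} {DW : Module.End ℂ W} {f g : ℂ → U → V → W}

theorem zero_left (hf : IsConformalBilin DU DV DW f) (l : ℂ) (v : V) : f l 0 v = 0 := by
  simpa using hf.smul_left l 0 0 v

theorem zero_right (hf : IsConformalBilin DU DV DW f) (l : ℂ) (u : U) : f l u 0 = 0 := by
  simpa using hf.smul_right l 0 u 0

theorem zero : IsConformalBilin DU DV DW fun _ _ _ => 0 := by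
  constructor <;> simp [IsPolyFun.zero]

theorem add (hf : IsConformalBilin DU DV DW f) (hg : IsConformalBilin DU DV DW g) :
    IsConformalBilin DU DV DW fun l u v => f l u v + g l u v where
  add_left l u u' v := by rw [hf.add_left, hg.add_left, add_add_add_comm]
  smul_left l c u v := by rw [hf.smul_left, hg.smul_left, smul_add]
  add_right l u v v' := by rw [hf.add_right, hg.add_right, add_add_add_comm]
  smul_right l c u v := by rw [hf.smul_right, hg.smul_right, smul_add]
  poly u v := (hf.poly u v).add (hg.poly u v)
  conf_left l u v := by rw [hf.conf_left, hg.conf_left, smul_add]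
  conf_right l u v := by
    rw [hf.conf_right, hg.conf_right, map_add, smul_add, add_add_add_comm]

theorem prodMk {W' : Type*} [AddCommGroup W'] [Module ℂ W'] {DW' : Module.End ℂ W'}
    {f' : ℂ → U → V → W'} (hf : IsConformalBilin DU DV DW f)
    (hf' : IsConformalBilin DU DV DW' f') :
    IsConformalBilin DU DV (LinearMap.prodMap DW DW') fun l u v => (f l u v, f' l u v) where
  add_left l u u' v := Prod.ext (hf.add_left l u u' v) (hf'.add_left l u u' v)
  smul_left l c u v := Prod.ext (hf.smul_left l c u v) (hf'.smul_left l c u v)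
  add_right l u v v' := Prod.ext (hf.add_right l u v v') (hf'.add_right l u v v')
  smul_right l c u v := Prod.ext (hf.smul_right l c u v) (hf'.smul_right l c u v)
  poly u v := (hf.poly u v).prodMk (hf'.poly u v)
  conf_left l u v := Prod.ext (hf.conf_left l u v) (hf'.conf_left l u v)
  conf_right l u v := Prod.ext (hf.conf_right l u v) (hf'.conf_right l u v)

theorem comp {U' V' : Type*} [AddCommGroup U'] [Module ℂ U'] [AddCommGroup V'] [Module ℂ V']
    {DU' : Module.End ℂ U'} {DV' : Module.End ℂ V'} (hf : IsConformalBilin DU DV DW f)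
    (φ : U' →ₗ[ℂ] U) (ψ : V' →ₗ[ℂ] V)
    (hφ : ∀ u, φ (DU' u) = DU (φ u)) (hψ : ∀ v, ψ (DV' v) = DV (ψ v)) :
    IsConformalBilin DU' DV' DW fun l u v => f l (φ u) (ψ v) where
  add_left l u u' v := by rw [map_add, hf.add_left]
  smul_left l c u v := by rw [map_smul, hf.smul_left]
  add_right l u v v' := by rw [map_add, hf.add_right]
  smul_right l c u v := by rw [map_smul, hf.smul_right]
  poly u v := hf.poly (φ u) (ψ v)
  conf_left l u v := by rw [hφ, hf.conf_left]
  conf_right l u v := by rw [hψ, hf.conf_right]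

end IsConformalBilin

/-- The jacobiator of a `λ`-bracket: the defect
`[a_λ [b_μ c]] - [[a_λ b]_{λ+μ} c] - [b_μ [a_λ c]]` in the Jacobi identity. -/
def jacobiator {R : Type*} [AddCommGroup R] (br : ℂ → R → R → R) (l m : ℂ) (a b c : R) : R :=
  br l a (br m b c) - br (l + m) (br l a b) c - br m b (br l a c)

theorem jacobiator_eq_zero_iff {R : Type*} [AddCommGroup R] {br : ℂ → R → R → R}
    {l m : ℂ} {a b c : R} :
    jacobiator br l m a b c = 0 ↔
      br l a (br m b c) = br (l + m) (br l a b) c + br m b (br l a c) := by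
  rw [jacobiator, sub_sub, sub_eq_zero]

section Jacobiator

variable {R : Type*} [AddCommGroup R] [Module ℂ R] {D : Module.End ℂ R} {br : ℂ → R → R → R}

theorem IsLeibnizConformal.jacobiator_eq_zero (h : IsLeibnizConformal D br) (l m : ℂ) (a b c : R) :
    jacobiator br l m a b c = 0 :=
  jacobiator_eq_zero_iff.2 (h.jacobi l m a b c)

namespace IsConformalBilin

theorem isLeibnizConformal_iff (hbr : IsConformalBilin D D D br) :
    IsLeibnizConformal D br ↔ ∀ l m a b c, jacobiator br l m a b c = 0 :=
  ⟨fun h => h.jacobiator_eq_zero,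
    fun h => ⟨hbr, fun l m a b c => jacobiator_eq_zero_iff.1 (h l m a b c)⟩⟩

theorem jacobiator_add_left (hbr : IsConformalBilin D D D br) (l m : ℂ) (a a' b c : R) :
    jacobiator br l m (a + a') b c = jacobiator br l m a b c + jacobiator br l m a' b c := by
  simp only [jacobiator, hbr.add_left, hbr.add_right]
  abel

theorem jacobiator_add_middle (hbr : IsConformalBilin D D D br) (l m : ℂ) (a b b' c : R) :
    jacobiator br l m a (b + b') c = jacobiator br l m a b c + jacobiator br l m a b' c := by
  simp only [jacobiator, hbr.add_left, hbr.add_right]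
  abel

theorem jacobiator_add_right (hbr : IsConformalBilin D D D br) (l m : ℂ) (a b c c' : R) :
    jacobiator br l m a b (c + c') = jacobiator br l m a b c + jacobiator br l m a b c' := by
  simp only [jacobiator, hbr.add_right]
  abel

theorem jacobiator_add_jacobiator_swap (hbr : IsConformalBilin D D D br) (l m : ℂ) (a b c : R) :
    jacobiator br l m a b c + jacobiator br m l b a c
      = -br (l + m) (br l a b + br m b a) c := by
  rw [jacobiator, jacobiator, add_comm m l, hbr.add_left]
  abel

theorem jacobiator_swap_eq_zero_iff (hbr : IsConformalBilin D D D br) {l m : ℂ} {a b c : R}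
    (h : jacobiator br l m a b c = 0) :
    jacobiator br m l b a c = 0 ↔ br (l + m) (br l a b + br m b a) c = 0 := by
  rw [← neg_eq_zero (a := br _ _ _), ← hbr.jacobiator_add_jacobiator_swap, h, zero_add]

end IsConformalBilin

end Jacobiator

theorem IsConformalBilin.isLeibnizConformal_prod_iff
    {R Q : Type*} [AddCommGroup R] [Module ℂ R] [AddCommGroup Q] [Module ℂ Q]
    {D : Module.End ℂ (R × Q)} {B : ℂ → R × Q → R × Q → R × Q} (hB : IsConformalBilin D D D B) :
    IsLeibnizConformal D B ↔
      (∀ (l m : ℂ) (a b c : R), jacobiator B l m (a, 0) (b, 0) (c, 0) = 0) ∧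
      (∀ (l m : ℂ) (a b : R) (x : Q), jacobiator B l m (a, 0) (b, 0) (0, x) = 0) ∧
      (∀ (l m : ℂ) (a b : R) (x : Q), jacobiator B l m (a, 0) (0, x) (b, 0) = 0) ∧
      (∀ (l m : ℂ) (a b : R) (x : Q),
        B (l + m) (B l (a, 0) (0, x) + B m (0, x) (a, 0)) (b, 0) = 0) ∧
      (∀ (l m : ℂ) (a : R) (x y : Q), jacobiator B l m (a, 0) (0, x) (0, y) = 0) ∧
      (∀ (l m : ℂ) (a : R) (x y : Q),
        B (l + m) (B l (a, 0) (0, x) + B m (0, x) (a, 0)) (0, y) = 0) ∧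
      (∀ (l m : ℂ) (a : R) (x y : Q), jacobiator B l m (0, x) (0, y) (a, 0) = 0) ∧
      (∀ (l m : ℂ) (x y z : Q), jacobiator B l m (0, x) (0, y) (0, z) = 0) := by
  rw [hB.isLeibnizConformal_iff]
  constructor
  · intro hJ
    have symm_bracket_left (l m : ℂ) (p q r : R × Q) : B (l + m) (B l p q + B m q p) r = 0 :=
      (hB.jacobiator_swap_eq_zero_iff (hJ l m p q r)).1 (hJ m l q p r)
    simp only [hJ, symm_bracket_left, implies_true, and_self]
  · rintro ⟨hRRR, hRRQ, hRQR, hRQR_symm, hRQQ, hRQQ_symm, hQQR, hQQQ⟩ l m ⟨a, x⟩ ⟨b, y⟩ ⟨c, z⟩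
    have hQRR (a b : R) (x : Q) : jacobiator B l m (0, x) (a, 0) (b, 0) = 0 :=
      (hB.jacobiator_swap_eq_zero_iff (hRQR m l a b x)).2 (hRQR_symm m l a b x)
    have hQRQ (a : R) (x y : Q) : jacobiator B l m (0, x) (a, 0) (0, y) = 0 :=
      (hB.jacobiator_swap_eq_zero_iff (hRQQ m l a x y)).2 (hRQQ_symm m l a x y)
    rw [← Prod.fst_add_snd (a, x), ← Prod.fst_add_snd (b, y), ← Prod.fst_add_snd (c, z)]
    simp only [hB.jacobiator_add_left, hB.jacobiator_add_middle, hB.jacobiator_add_right,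
      hRRR, hRRQ, hRQR, hRQQ, hQRR, hQRQ, hQQR, hQQQ, add_zero]

namespace IsExtendingDatum

variable {R Q : Type*} [AddCommGroup R] [Module ℂ R] [AddCommGroup Q] [Module ℂ Q]
  {DR : Module.End ℂ R} {DQ : Module.End ℂ Q} {br : ℂ → R → R → R}
  {lh : ℂ → R → Q → R} {rh : ℂ → R → Q → Q} {lt : ℂ → Q → R → Q} {rt : ℂ → Q → R → R}
  {fm : ℂ → Q → Q → R} {bq : ℂ → Q → Q → Q}

theorem isConformalBilin_unifiedBracket (h : IsExtendingDatum DR DQ lh rh lt rt fm bq)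
    (hbr : IsConformalBilin DR DR DR br) :
    IsConformalBilin (LinearMap.prodMap DR DQ) (LinearMap.prodMap DR DQ) (LinearMap.prodMap DR DQ)
      (unifiedBracket br lh rh lt rt fm bq) := by
  let pr₁ := LinearMap.fst ℂ R Q
  let pr₂ := LinearMap.snd ℂ R Q
  have hpr₁ (p : R × Q) : pr₁ (LinearMap.prodMap DR DQ p) = DR (pr₁ p) := rfl
  have hpr₂ (p : R × Q) : pr₂ (LinearMap.prodMap DR DQ p) = DQ (pr₂ p) := rfl
  exact ((((hbr.comp pr₁ pr₁ hpr₁ hpr₁).add (h.lh_bilin.comp pr₁ pr₂ hpr₁ hpr₂)).add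
    (h.rt_bilin.comp pr₂ pr₁ hpr₂ hpr₁)).add (h.fm_bilin.comp pr₂ pr₂ hpr₂ hpr₂)).prodMk
      (((h.rh_bilin.comp pr₁ pr₂ hpr₁ hpr₂).add (h.lt_bilin.comp pr₂ pr₁ hpr₂ hpr₁)).add
        (h.bq_bilin.comp pr₂ pr₂ hpr₂ hpr₂))

theorem unifiedBracket_inl_inl (h : IsExtendingDatum DR DQ lh rh lt rt fm bq) (l : ℂ) (a b : R) :
    unifiedBracket br lh rh lt rt fm bq l (a, 0) (b, 0) = (br l a b, 0) := by
  simp [unifiedBracket, h.lh_bilin.zero_right, h.rh_bilin.zero_right, h.lt_bilin.zero_left,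
    h.rt_bilin.zero_left, h.fm_bilin.zero_left, h.bq_bilin.zero_left]

theorem unifiedBracket_inl_inr (h : IsExtendingDatum DR DQ lh rh lt rt fm bq)
    (hbr : IsConformalBilin DR DR DR br) (l : ℂ) (a : R) (x : Q) :
    unifiedBracket br lh rh lt rt fm bq l (a, 0) (0, x) = (lh l a x, 0) + (0, rh l a x) := by
  simp [unifiedBracket, hbr.zero_right, h.lt_bilin.zero_left,
    h.rt_bilin.zero_left, h.fm_bilin.zero_left, h.bq_bilin.zero_left]

theorem unifiedBracket_inr_inl (h : IsExtendingDatum DR DQ lh rh lt rt fm bq)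
    (hbr : IsConformalBilin DR DR DR br) (l : ℂ) (x : Q) (a : R) :
    unifiedBracket br lh rh lt rt fm bq l (0, x) (a, 0) = (rt l x a, 0) + (0, lt l x a) := by
  simp [unifiedBracket, hbr.zero_left, h.lh_bilin.zero_left, h.rh_bilin.zero_left,
    h.fm_bilin.zero_right, h.bq_bilin.zero_right]

theorem unifiedBracket_inr_inr (h : IsExtendingDatum DR DQ lh rh lt rt fm bq)
    (hbr : IsConformalBilin DR DR DR br) (l : ℂ) (x y : Q) :
    unifiedBracket br lh rh lt rt fm bq l (0, x) (0, y) = (fm l x y, 0) + (0, bq l x y) := by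
  simp [unifiedBracket, hbr.zero_left, h.lh_bilin.zero_left, h.rh_bilin.zero_left,
    h.lt_bilin.zero_right, h.rt_bilin.zero_right]

end IsExtendingDatum

/-- The crossed product bracket: the unified product bracket with trivial `⇀` and `◁`. -/
abbrev crossedBracket {R Q : Type*} [AddCommGroup R] [Module ℂ R] [AddCommGroup Q] [Module ℂ Q]
    (br : ℂ → R → R → R) (lh : ℂ → R → Q → R) (rt : ℂ → Q → R → R)
    (fm : ℂ → Q → Q → R) (bq : ℂ → Q → Q → Q) : ℂ → R × Q → R × Q → R × Q :=
  unifiedBracket br lh (fun _ _ _ => 0) (fun _ _ _ => 0) rt fm bq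

/-- A crossed product datum: an extending datum with trivial `⇀` and `◁`. -/
abbrev IsCrossedDatum {R Q : Type*} [AddCommGroup R] [Module ℂ R] [AddCommGroup Q] [Module ℂ Q]
    (DR : Module.End ℂ R) (DQ : Module.End ℂ Q) (lh : ℂ → R → Q → R) (rt : ℂ → Q → R → R)
    (fm : ℂ → Q → Q → R) (bq : ℂ → Q → Q → Q) : Prop :=
  IsExtendingDatum DR DQ lh (fun _ _ _ => 0) (fun _ _ _ => 0) rt fm bq

namespace IsCrossedDatum

variable {R Q : Type*} [AddCommGroup R] [Module ℂ R] [AddCommGroup Q] [Module ℂ Q]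
  {DR : Module.End ℂ R} {DQ : Module.End ℂ Q} {br : ℂ → R → R → R}
  {lh : ℂ → R → Q → R} {rt : ℂ → Q → R → R} {fm : ℂ → Q → Q → R} {bq : ℂ → Q → Q → Q}

theorem crossedBracket_inl_inr (h : IsCrossedDatum DR DQ lh rt fm bq)
    (hbr : IsConformalBilin DR DR DR br) (l : ℂ) (a : R) (x : Q) :
    crossedBracket br lh rt fm bq l (a, 0) (0, x) = (lh l a x, 0) := by
  simpa using h.unifiedBracket_inl_inr hbr l a x

theorem crossedBracket_inr_inl (h : IsCrossedDatum DR DQ lh rt fm bq)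
    (hbr : IsConformalBilin DR DR DR br) (l : ℂ) (x : Q) (a : R) :
    crossedBracket br lh rt fm bq l (0, x) (a, 0) = (rt l x a, 0) := by
  simpa using h.unifiedBracket_inr_inl hbr l x a

theorem jacobiator_inl_inl_inl (h : IsCrossedDatum DR DQ lh rt fm bq) (l m : ℂ) (a b c : R) :
    jacobiator (crossedBracket br lh rt fm bq) l m (a, 0) (b, 0) (c, 0)
      = (jacobiator br l m a b c, 0) := by
  simp only [jacobiator, h.unifiedBracket_inl_inl, Prod.mk_sub_mk, sub_zero]

theorem jacobiator_inl_inl_inr_eq_zero_iff (h : IsCrossedDatum DR DQ lh rt fm bq)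
    (hbr : IsConformalBilin DR DR DR br) {l m : ℂ} {a b : R} {x : Q} :
    jacobiator (crossedBracket br lh rt fm bq) l m (a, 0) (b, 0) (0, x) = 0 ↔
      lh (l + m) (br l a b) x = br l a (lh m b x) - br m b (lh l a x) := by
  simp only [jacobiator, h.unifiedBracket_inl_inl, h.crossedBracket_inl_inr hbr, Prod.mk_sub_mk,
    sub_zero, Prod.mk_eq_zero, and_true]
  rw [sub_right_comm, sub_eq_zero, eq_comm]

theorem jacobiator_inl_inr_inl_eq_zero_iff (h : IsCrossedDatum DR DQ lh rt fm bq)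
    (hbr : IsConformalBilin DR DR DR br) {l m : ℂ} {a b : R} {x : Q} :
    jacobiator (crossedBracket br lh rt fm bq) l m (a, 0) (0, x) (b, 0) = 0 ↔
      rt m x (br l a b) = br l a (rt m x b) - br (l + m) (lh l a x) b := by
  simp only [jacobiator, h.unifiedBracket_inl_inl, h.crossedBracket_inl_inr hbr,
    h.crossedBracket_inr_inl hbr, Prod.mk_sub_mk, sub_zero, Prod.mk_eq_zero, and_true]
  rw [sub_eq_zero, eq_comm]

theorem symm_bracket_inl_eq_zero_iff (h : IsCrossedDatum DR DQ lh rt fm bq)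
    (hbr : IsConformalBilin DR DR DR br) {l m : ℂ} {a b : R} {x : Q} :
    crossedBracket br lh rt fm bq (l + m)
        (crossedBracket br lh rt fm bq l (a, 0) (0, x)
          + crossedBracket br lh rt fm bq m (0, x) (a, 0)) (b, 0) = 0 ↔
      br (l + m) (rt m x a) b + br (l + m) (lh l a x) b = 0 := by
  simp only [h.crossedBracket_inl_inr hbr, h.crossedBracket_inr_inl hbr, Prod.mk_add_mk, add_zero,
    h.unifiedBracket_inl_inl, Prod.mk_eq_zero, and_true]
  rw [hbr.add_left, add_comm]

theorem jacobiator_inl_inr_inr_eq_zero_iff (h : IsCrossedDatum DR DQ lh rt fm bq)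
    (hbr : IsConformalBilin DR DR DR br) {l m : ℂ} {a : R} {x y : Q} :
    jacobiator (crossedBracket br lh rt fm bq) l m (a, 0) (0, x) (0, y) = 0 ↔
      lh l a (bq m x y)
        = lh (l + m) (lh l a x) y + rt m x (lh l a y) - br l a (fm m x y) := by
  simp only [jacobiator, (h.isConformalBilin_unifiedBracket hbr).add_right,
    h.unifiedBracket_inl_inl, h.crossedBracket_inl_inr hbr, h.crossedBracket_inr_inl hbr,
    h.unifiedBracket_inr_inr hbr]
  simp only [Prod.mk_sub_mk, Prod.mk_add_mk, add_zero, sub_zero, Prod.mk_eq_zero, and_true]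
  rw [sub_sub, sub_eq_zero, eq_sub_iff_add_eq']

theorem symm_bracket_inr_eq_zero_iff (h : IsCrossedDatum DR DQ lh rt fm bq)
    (hbr : IsConformalBilin DR DR DR br) {l m : ℂ} {a : R} {x y : Q} :
    crossedBracket br lh rt fm bq (l + m)
        (crossedBracket br lh rt fm bq l (a, 0) (0, x)
          + crossedBracket br lh rt fm bq m (0, x) (a, 0)) (0, y) = 0 ↔
      lh (l + m) (rt m x a) y + lh (l + m) (lh l a x) y = 0 := by
  simp only [h.crossedBracket_inl_inr hbr, h.crossedBracket_inr_inl hbr, Prod.mk_add_mk, add_zero,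
    Prod.mk_eq_zero, and_true]
  rw [h.lh_bilin.add_left, add_comm]

theorem jacobiator_inr_inr_inl_eq_zero_iff (h : IsCrossedDatum DR DQ lh rt fm bq)
    (hbr : IsConformalBilin DR DR DR br) {l m : ℂ} {a : R} {x y : Q} :
    jacobiator (crossedBracket br lh rt fm bq) l m (0, x) (0, y) (a, 0) = 0 ↔
      rt (l + m) (bq l x y) a
        = rt l x (rt m y a) - br (l + m) (fm l x y) a - rt m y (rt l x a) := by
  simp only [jacobiator, (h.isConformalBilin_unifiedBracket hbr).add_left,
    h.unifiedBracket_inl_inl, h.crossedBracket_inr_inl hbr, h.unifiedBracket_inr_inr hbr]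
  simp only [Prod.mk_sub_mk, Prod.mk_add_mk, add_zero, sub_zero, Prod.mk_eq_zero, and_true]
  rw [← sub_sub, sub_right_comm, sub_eq_zero, eq_comm]

theorem jacobiator_inr_inr_inr_eq_zero_iff (h : IsCrossedDatum DR DQ lh rt fm bq)
    (hbr : IsConformalBilin DR DR DR br) {l m : ℂ} {x y z : Q} :
    jacobiator (crossedBracket br lh rt fm bq) l m (0, x) (0, y) (0, z) = 0 ↔
      jacobiator bq l m x y z = 0 ∧
      rt l x (fm m y z)
        = lh (l + m) (fm l x y) z + fm (l + m) (bq l x y) z + rt m y (fm l x z)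
          + fm m y (bq l x z) - fm l x (bq m y z) := by
  simp only [jacobiator, (h.isConformalBilin_unifiedBracket hbr).add_left,
    (h.isConformalBilin_unifiedBracket hbr).add_right, h.crossedBracket_inl_inr hbr,
    h.crossedBracket_inr_inl hbr, h.unifiedBracket_inr_inr hbr]
  simp only [Prod.mk_sub_mk, Prod.mk_add_mk, add_zero, zero_add, Prod.mk_eq_zero]
  refine and_comm.trans (and_congr_right' ?_)
  rw [sub_sub, sub_eq_zero, eq_sub_iff_add_eq, ← add_assoc]

end IsCrossedDatum

/-- For an extending datum with `⇀` and `◁` trivial, the crossed product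
bracket `[(a,x)_λ (b,y)] = ([a_λ b] + x▷_λ b + a↼_λ y + f_λ(x,y), {x_λ y})` makes
`R × Q` a Leibniz conformal algebra if and only if `(Q, {·_λ·})` is a Leibniz conformal
algebra and conditions (C1)–(C7) hold. -/
theorem crossed_product_isLeibnizConformal_iff
    {R Q : Type*} [AddCommGroup R] [Module ℂ R] [AddCommGroup Q] [Module ℂ Q]
    (DR : Module.End ℂ R) (DQ : Module.End ℂ Q)
    (br : ℂ → R → R → R) (hLeib : IsLeibnizConformal DR br)
    (lh : ℂ → R → Q → R) (rt : ℂ → Q → R → R)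
    (fm : ℂ → Q → Q → R) (bq : ℂ → Q → Q → Q)
    (hlh : IsConformalBilin DR DQ DR lh) (hrt : IsConformalBilin DQ DR DR rt)
    (hfm : IsConformalBilin DQ DQ DR fm) (hbq : IsConformalBilin DQ DQ DQ bq) :
    IsLeibnizConformal (LinearMap.prodMap DR DQ)
      (unifiedBracket br lh (fun _ _ _ => 0) (fun _ _ _ => 0) rt fm bq) ↔
    (IsLeibnizConformal DQ bq ∧
     (∀ (l m : ℂ) (a b : R) (x : Q),   -- (C1)
        lh (l + m) (br l a b) x = br l a (lh m b x) - br m b (lh l a x)) ∧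
     (∀ (l m : ℂ) (a b : R) (x : Q),   -- (C2)
        rt m x (br l a b) = br l a (rt m x b) - br (l + m) (lh l a x) b) ∧
     (∀ (l m : ℂ) (a b : R) (x : Q),   -- (C3)
        br (l + m) (rt m x a) b + br (l + m) (lh l a x) b = 0) ∧
     (∀ (l m : ℂ) (a : R) (x y : Q),   -- (C4)
        lh l a (bq m x y)
          = lh (l + m) (lh l a x) y + rt m x (lh l a y) - br l a (fm m x y)) ∧
     (∀ (l m : ℂ) (a : R) (x y : Q),   -- (C5)
        lh (l + m) (rt m x a) y + lh (l + m) (lh l a x) y = 0) ∧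
     (∀ (l m : ℂ) (a : R) (x y : Q),   -- (C6)
        rt (l + m) (bq l x y) a
          = rt l x (rt m y a) - br (l + m) (fm l x y) a - rt m y (rt l x a)) ∧
     (∀ (l m : ℂ) (x y z : Q),         -- (C7)
        rt l x (fm m y z)
          = lh (l + m) (fm l x y) z + fm (l + m) (bq l x y) z + rt m y (fm l x z)
            + fm m y (bq l x z) - fm l x (bq m y z))) := by
  have hbr := hLeib.bilin
  have h : IsCrossedDatum DR DQ lh rt fm bq := ⟨hlh, .zero, .zero, hrt, hfm, hbq⟩
  rw [(h.isConformalBilin_unifiedBracket hbr).isLeibnizConformal_prod_iff,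
    hbq.isLeibnizConformal_iff]
  simp only [h.jacobiator_inl_inl_inl, hLeib.jacobiator_eq_zero, Prod.mk_zero_zero,
    h.jacobiator_inl_inl_inr_eq_zero_iff hbr, h.jacobiator_inl_inr_inl_eq_zero_iff hbr,
    h.symm_bracket_inl_eq_zero_iff hbr, h.jacobiator_inl_inr_inr_eq_zero_iff hbr,
    h.symm_bracket_inr_eq_zero_iff hbr, h.jacobiator_inr_inr_inl_eq_zero_iff hbr,
    h.jacobiator_inr_inr_inr_eq_zero_iff hbr, forall_and, implies_true, true_and]
  tauto
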